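/- Let α and β be finite types, P a transition matrix over α × β with strictly positive stationary probability vector μ, and γ ∈ [0,1). Let r_A : α → ℝ and r_B : β → ℝ satisfy ‖r_A‖_∞ ≤ R_A and ‖r_B‖_∞ ≤ R_B. Suppose there exist a transition matrix M_A over α and a transition matrix M_B over β such that for every x : α → ℝ with ‖x‖_∞ ≤ 1, (1/2) ‖ P(x ⊗ e) − (M_A x) ⊗ e ‖_μ ≤ ε_A, and for every y : β → ℝ with ‖y‖_∞ ≤ 1, (1/2) ‖ P(e ⊗ y) − e ⊗ (M_B y) ‖_μ ≤ ε_B. Let P_A, P_B be the marginalized local transition matrices of P with respect to μ, let μ_A, μ_B be the marginals of μ on α and β, and set Q = (I − γP)^{-1}(r_A ⊗ e + e ⊗ r_B), Q_A = (I − γP_A)^{-1} r_A, Q_B = (I − γP_B)^{-1} r_B. Then: (i) for every x : α → ℝ with ‖x‖_∞ ≤ 1, ‖(P_A − M_A) x‖_{μ_A} ≤ 2ε_A, and symmetrically for B; and (ii) ‖Q − (Q_A ⊗ e + e ⊗ Q_B)‖_μ ≤ 4γ (ε_A R_A + ε_B R_B) / (1 − γ)². -/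

import Mathlib

open Matrix

/-- A transition matrix: nonnegative entries, each row sums to 1. -/
def IsTransition {ι : Type*} [Fintype ι] (P : Matrix ι ι ℝ) : Prop :=
  (∀ i j, 0 ≤ P i j) ∧ ∀ i, ∑ j, P i j = 1

/-- The marginalized local transition matrix of agent `A`. -/
noncomputable def localA {α β : Type*} [Fintype α] [Fintype β]
    (P : Matrix (α × β) (α × β) ℝ) (μ : α × β → ℝ) : Matrix α α ℝ :=
  Matrix.of fun a a' =>
    ∑ b, (μ (a, b) / ∑ b', μ (a, b')) * ∑ b', P (a, b) (a', b')

/-- The marginalized local transition matrix of agent `B`. -/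
noncomputable def localB {α β : Type*} [Fintype α] [Fintype β]
    (P : Matrix (α × β) (α × β) ℝ) (μ : α × β → ℝ) : Matrix β β ℝ :=
  Matrix.of fun b b' =>
    ∑ a, (μ (a, b) / ∑ a', μ (a', b)) * ∑ a', P (a, b) (a', b')

open Finset in
/-- If `v - γ P v` is bounded by `R` in sup norm, then `v` is bounded by `R / (1 - γ)`. -/
lemma IsTransition.abs_le_div_of_abs_sub_le {ι : Type*} [Fintype ι] {P : Matrix ι ι ℝ}
    (hP : IsTransition P) {γ R : ℝ} (hγ0 : 0 ≤ γ) (hγ1 : γ < 1) {v : ι → ℝ}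
    (hv : ∀ i, |v i - γ * (P *ᵥ v) i| ≤ R) (i : ι) : |v i| ≤ R / (1 - γ) := by
  obtain ⟨k, -, hk⟩ := exists_max_image univ (fun j => |v j|) ⟨i, mem_univ i⟩
  refine (hk i (mem_univ i)).trans ?_
  rw [le_div_iff₀ (by linarith)]
  have hPv : |(P *ᵥ v) k| ≤ |v k| := by
    calc |(P *ᵥ v) k| ≤ ∑ j, |P k j * v j| := abs_sum_le_sum_abs _ _
      _ ≤ ∑ j, P k j * |v k| := sum_le_sum fun j _ => by
          rw [abs_mul, abs_of_nonneg (hP.1 k j)]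
          exact mul_le_mul_of_nonneg_left (hk j (mem_univ j)) (hP.1 k j)
      _ = |v k| := by rw [← sum_mul, hP.2, one_mul]
  have htri : |v k| ≤ |v k - γ * (P *ᵥ v) k| + |γ * (P *ᵥ v) k| := by
    simpa using abs_add_le (v k - γ * (P *ᵥ v) k) (γ * (P *ᵥ v) k)
  rw [abs_mul, abs_of_nonneg hγ0] at htri
  nlinarith [hv k, mul_le_mul_of_nonneg_left hPv hγ0]

lemma one_sub_smul_mulVec_apply {ι : Type*} [Fintype ι] [DecidableEq ι] (P : Matrix ι ι ℝ)
    (γ : ℝ) (v : ι → ℝ) (i : ι) : ((1 - γ • P) *ᵥ v) i = v i - γ * (P *ᵥ v) i := by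
  simp [sub_mulVec, smul_mulVec]

lemma IsTransition.isUnit_one_sub_smul {ι : Type*} [Fintype ι] [DecidableEq ι]
    {P : Matrix ι ι ℝ} (hP : IsTransition P) {γ : ℝ} (hγ0 : 0 ≤ γ) (hγ1 : γ < 1) :
    IsUnit (1 - γ • P) := by
  rw [← mulVec_injective_iff_isUnit]
  intro x y hxy
  have hzero : (1 - γ • P) *ᵥ (x - y) = 0 := by rw [mulVec_sub, sub_eq_zero]; exact hxy
  ext i
  have hi := hP.abs_le_div_of_abs_sub_le (R := 0) hγ0 hγ1 (v := x - y)
    (fun j => by rw [← one_sub_smul_mulVec_apply, hzero]; simp) i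
  rw [zero_div, abs_nonpos_iff] at hi
  exact sub_eq_zero.mp hi

lemma IsTransition.resolvent_sub_mulVec {ι : Type*} [Fintype ι] [DecidableEq ι]
    {P : Matrix ι ι ℝ} (hP : IsTransition P) {γ : ℝ} (hγ0 : 0 ≤ γ) (hγ1 : γ < 1)
    (r : ι → ℝ) (i : ι) :
    ((1 - γ • P)⁻¹ *ᵥ r) i - γ * (P *ᵥ ((1 - γ • P)⁻¹ *ᵥ r)) i = r i := by
  rw [← one_sub_smul_mulVec_apply, mulVec_mulVec, mul_nonsing_inv, one_mulVec]
  exact (isUnit_iff_isUnit_det _).mp (hP.isUnit_one_sub_smul hγ0 hγ1)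

open Finset in
/-- A transition matrix is a contraction in the weighted `L¹` norm of a stationary vector. -/
lemma IsTransition.sum_mul_abs_mulVec_le {ι : Type*} [Fintype ι] {P : Matrix ι ι ℝ}
    (hP : IsTransition P) {μ : ι → ℝ} (hμ : ∀ i, 0 ≤ μ i)
    (hstat : ∀ j, ∑ i, μ i * P i j = μ j) (v : ι → ℝ) :
    ∑ i, μ i * |(P *ᵥ v) i| ≤ ∑ i, μ i * |v i| := by
  calc ∑ i, μ i * |(P *ᵥ v) i| ≤ ∑ i, μ i * ∑ j, P i j * |v j| :=
        sum_le_sum fun i _ => mul_le_mul_of_nonneg_left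
          ((abs_sum_le_sum_abs _ _).trans_eq (sum_congr rfl fun j _ => by
            rw [abs_mul, abs_of_nonneg (hP.1 i j)])) (hμ i)
    _ = ∑ j, (∑ i, μ i * P i j) * |v j| := by
        simp_rw [mul_sum, sum_mul, mul_assoc]
        exact sum_comm
    _ = ∑ i, μ i * |v i| := by simp_rw [hstat]

open Finset in
/-- The resolvent bound `(1 - γ) ‖v‖_μ ≤ ‖v - γ P v‖_μ`. -/
lemma IsTransition.one_sub_mul_sum_le {ι : Type*} [Fintype ι] {P : Matrix ι ι ℝ}
    (hP : IsTransition P) {μ : ι → ℝ} (hμ : ∀ i, 0 ≤ μ i)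
    (hstat : ∀ j, ∑ i, μ i * P i j = μ j) {γ : ℝ} (hγ0 : 0 ≤ γ) (v : ι → ℝ) :
    (1 - γ) * ∑ i, μ i * |v i| ≤ ∑ i, μ i * |v i - γ * (P *ᵥ v) i| := by
  have htri : ∑ i, μ i * |v i| ≤
      ∑ i, μ i * |v i - γ * (P *ᵥ v) i| + γ * ∑ i, μ i * |(P *ᵥ v) i| := by
    rw [mul_sum, ← sum_add_distrib]
    refine sum_le_sum fun i _ => ?_
    have h := abs_add_le (v i - γ * (P *ᵥ v) i) (γ * (P *ᵥ v) i)
    rw [sub_add_cancel, abs_mul, abs_of_nonneg hγ0] at h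
    linarith [mul_le_mul_of_nonneg_left h (hμ i)]
  linarith [mul_le_mul_of_nonneg_left (hP.sum_mul_abs_mulVec_le hμ hstat v) hγ0]

open Finset in
/-- If `P` nearly intertwines with `L` along `f` in the `μ`-norm, then so do the resolvents. -/
lemma IsTransition.sum_abs_resolvent_sub_le {Ω ι : Type*} [Fintype Ω] [DecidableEq Ω]
    [Fintype ι] [DecidableEq ι] {P : Matrix Ω Ω ℝ} (hP : IsTransition P) {L : Matrix ι ι ℝ}
    (hL : IsTransition L) {μ : Ω → ℝ} (hμ : ∀ p, 0 ≤ μ p)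
    (hstat : ∀ q, ∑ p, μ p * P p q = μ q) (f : Ω → ι)
    {γ R δ : ℝ} (hγ0 : 0 ≤ γ) (hγ1 : γ < 1) (hR : 0 ≤ R) {r : ι → ℝ} (hr : ∀ a, |r a| ≤ R)
    (hδ : ∀ x : ι → ℝ, (∀ a, |x a| ≤ 1) →
      ∑ p, μ p * |(P *ᵥ fun q => x (f q)) p - (L *ᵥ x) (f p)| ≤ δ) :
    ∑ p, μ p * |((1 - γ • P)⁻¹ *ᵥ fun q => r (f q)) p - ((1 - γ • L)⁻¹ *ᵥ r) (f p)|
      ≤ γ * δ * R / (1 - γ) ^ 2 := by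
  have hγ : 0 < 1 - γ := by linarith
  set QL := (1 - γ • L)⁻¹ *ᵥ r
  set QP := (1 - γ • P)⁻¹ *ᵥ fun q => r (f q)
  have hQLeq : ∀ a, QL a - γ * (L *ᵥ QL) a = r a := hL.resolvent_sub_mulVec hγ0 hγ1 r
  have hQPeq : ∀ p, QP p - γ * (P *ᵥ QP) p = r (f p) :=
    hP.resolvent_sub_mulVec hγ0 hγ1 fun q => r (f q)
  have hbound : ∀ a, |QL a| ≤ R / (1 - γ) :=
    hL.abs_le_div_of_abs_sub_le hγ0 hγ1 fun a => by rw [hQLeq]; exact hr a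
  have hscaled : ∑ p, μ p * |(P *ᵥ fun q => QL (f q)) p - (L *ᵥ QL) (f p)|
      ≤ R / (1 - γ) * δ := by
    set c := R / (1 - γ)
    have hc0 : 0 ≤ c := div_nonneg hR hγ.le
    obtain ⟨x, hx, hQx⟩ : ∃ x : ι → ℝ, (∀ a, |x a| ≤ 1) ∧ QL = c • x := by
      refine ⟨c⁻¹ • QL, fun a => ?_, ?_⟩
      · rw [Pi.smul_apply, smul_eq_mul, abs_mul, abs_of_nonneg (inv_nonneg.mpr hc0)]
        exact (mul_le_mul_of_nonneg_left (hbound a) (inv_nonneg.mpr hc0)).trans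
          inv_mul_le_one
      · rcases hc0.eq_or_lt with h | h
        · ext a
          have := hbound a
          rw [← h, abs_nonpos_iff] at this
          simp [← h, this]
        · rw [smul_inv_smul₀ h.ne']
    have hcomp : (fun q => QL (f q)) = c • fun q => x (f q) := by rw [hQx]; rfl
    refine le_trans (le_of_eq ?_) (mul_le_mul_of_nonneg_left (hδ x hx) hc0)
    rw [hcomp, hQx, mulVec_smul, mulVec_smul, mul_sum]
    refine sum_congr rfl fun p _ => ?_
    simp only [Pi.smul_apply, smul_eq_mul]
    rw [← mul_sub, abs_mul, abs_of_nonneg hc0]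
    ring
  have hres := hP.one_sub_mul_sum_le hμ hstat hγ0 (QP - fun q => QL (f q))
  have hdefect : ∀ p, (QP - fun q => QL (f q)) p - γ * (P *ᵥ (QP - fun q => QL (f q))) p
      = γ * ((P *ᵥ fun q => QL (f q)) p - (L *ᵥ QL) (f p)) := by
    intro p
    rw [mulVec_sub]
    simp only [Pi.sub_apply]
    linarith [hQLeq (f p), hQPeq p]
  simp_rw [hdefect, abs_mul, abs_of_nonneg hγ0, mul_left_comm _ γ, ← mul_sum] at hres
  have hfinal := hres.trans (mul_le_mul_of_nonneg_left hscaled hγ0)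
  rw [mul_comm, ← le_div_iff₀ hγ] at hfinal
  refine hfinal.trans_eq ?_
  field_simp

lemma marginal_mul_localA_mulVec {α β : Type*} [Fintype α] [Fintype β]
    (P : Matrix (α × β) (α × β) ℝ) (μ : α × β → ℝ) (hμ : ∀ a, ∑ b, μ (a, b) ≠ 0)
    (x : α → ℝ) (a : α) :
    (∑ b, μ (a, b)) * (localA P μ *ᵥ x) a
      = ∑ b, μ (a, b) * (P *ᵥ fun q => x q.1) (a, b) := by
  simp only [mulVec, dotProduct, localA, of_apply, Fintype.sum_prod_type]
  have hw := hμ a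
  generalize ∑ b, μ (a, b) = w at hw ⊢
  simp only [Finset.mul_sum, Finset.sum_mul]
  rw [Finset.sum_comm]
  refine Finset.sum_congr rfl fun b _ => Finset.sum_congr rfl fun a' _ =>
    Finset.sum_congr rfl fun b' _ => ?_
  field_simp

lemma isTransition_localA {α β : Type*} [Fintype α] [Fintype β]
    {P : Matrix (α × β) (α × β) ℝ} (hP : IsTransition P) {μ : α × β → ℝ} (hμ0 : ∀ p, 0 ≤ μ p)
    (hμ : ∀ a, ∑ b, μ (a, b) ≠ 0) : IsTransition (localA P μ) := by
  refine ⟨fun a a' => Finset.sum_nonneg fun b _ => mul_nonneg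
    (div_nonneg (hμ0 _) (Finset.sum_nonneg fun _ _ => hμ0 _))
    (Finset.sum_nonneg fun _ _ => hP.1 _ _), fun a => ?_⟩
  have h := marginal_mul_localA_mulVec P μ hμ (fun _ => 1) a
  simp only [mulVec, dotProduct, mul_one, hP.2] at h
  exact mul_left_cancel₀ (hμ a) (h.trans (mul_one _).symm)

open Finset in
lemma sum_marginal_abs_localA_sub_le {α β : Type*} [Fintype α] [Fintype β]
    (P : Matrix (α × β) (α × β) ℝ) {μ : α × β → ℝ} (hμ0 : ∀ p, 0 ≤ μ p)
    (hμ : ∀ a, ∑ b, μ (a, b) ≠ 0) (x y : α → ℝ) :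
    ∑ a, (∑ b, μ (a, b)) * |(localA P μ *ᵥ x) a - y a|
      ≤ ∑ p, μ p * |(P *ᵥ fun q => x q.1) p - y p.1| := by
  rw [Fintype.sum_prod_type]
  refine sum_le_sum fun a _ => ?_
  rw [← abs_of_nonneg (sum_nonneg fun b _ => hμ0 (a, b)), ← abs_mul, mul_sub,
    marginal_mul_localA_mulVec P μ hμ, sum_mul, ← sum_sub_distrib]
  refine (abs_sum_le_sum_abs _ _).trans_eq (sum_congr rfl fun b _ => ?_)
  rw [← mul_sub, abs_mul, abs_of_nonneg (hμ0 _)]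

lemma localB_eq_localA_swap {α β : Type*} [Fintype α] [Fintype β]
    (P : Matrix (α × β) (α × β) ℝ) (μ : α × β → ℝ) :
    localB P μ = localA (P.submatrix Prod.swap Prod.swap) (μ ∘ Prod.swap) := rfl

lemma IsTransition.submatrix_equiv {ι κ : Type*} [Fintype ι] [Fintype κ] {P : Matrix ι ι ℝ}
    (hP : IsTransition P) (e : κ ≃ ι) : IsTransition (P.submatrix e e) :=
  ⟨fun _ _ => hP.1 _ _, fun i => (Equiv.sum_comp e fun j => P (e i) j).trans (hP.2 _)⟩

lemma isTransition_localB {α β : Type*} [Fintype α] [Fintype β]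
    {P : Matrix (α × β) (α × β) ℝ} (hP : IsTransition P) {μ : α × β → ℝ} (hμ0 : ∀ p, 0 ≤ μ p)
    (hμ : ∀ b, ∑ a, μ (a, b) ≠ 0) : IsTransition (localB P μ) := by
  rw [localB_eq_localA_swap]
  exact isTransition_localA (hP.submatrix_equiv (Equiv.prodComm β α)) (fun _ => hμ0 _) hμ

lemma sum_marginal_abs_localB_sub_le {α β : Type*} [Fintype α] [Fintype β]
    (P : Matrix (α × β) (α × β) ℝ) {μ : α × β → ℝ} (hμ0 : ∀ p, 0 ≤ μ p)
    (hμ : ∀ b, ∑ a, μ (a, b) ≠ 0) (x y : β → ℝ) :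
    ∑ b, (∑ a, μ (a, b)) * |(localB P μ *ᵥ x) b - y b|
      ≤ ∑ p, μ p * |(P *ᵥ fun q => x q.2) p - y p.2| := by
  rw [localB_eq_localA_swap]
  refine (sum_marginal_abs_localA_sub_le (P.submatrix Prod.swap Prod.swap)
    (μ := μ ∘ Prod.swap) (fun _ => hμ0 _) hμ x y).trans_eq ?_
  rw [← Equiv.sum_comp (Equiv.prodComm β α)]
  refine Finset.sum_congr rfl fun p _ => ?_
  have h : (P.submatrix Prod.swap Prod.swap *ᵥ fun q => x q.1) p
      = (P *ᵥ fun q => x q.2) p.swap :=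
    Equiv.sum_comp (Equiv.prodComm β α) fun q => P p.swap q * x q.2
  rw [h]
  rfl

open Finset in
lemma sum_mul_abs_sub_le_add {Ω : Type*} [Fintype Ω] {μ : Ω → ℝ} (hμ : ∀ p, 0 ≤ μ p)
    (u v w : Ω → ℝ) :
    ∑ p, μ p * |u p - v p| ≤ ∑ p, μ p * |u p - w p| + ∑ p, μ p * |v p - w p| := by
  rw [← sum_add_distrib]
  refine sum_le_sum fun p _ => ?_
  rw [← mul_add, abs_sub_comm (v p)]
  exact mul_le_mul_of_nonneg_left (abs_sub_le _ _ _) (hμ p)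

/-- Decomposition error in `μ`-norm bounded by the measure of Markov entanglement w.r.t.
the `μ`-weighted agent-wise total variation distance. -/
theorem stmt12 {α β : Type*} [Fintype α] [Fintype β] [DecidableEq α] [DecidableEq β]
    (P : Matrix (α × β) (α × β) ℝ) (hP : IsTransition P)
    (μ : α × β → ℝ) (hμpos : ∀ p, 0 < μ p) (hμsum : ∑ p, μ p = 1)
    (hstat : ∀ q, ∑ p, μ p * P p q = μ q)
    (γ RA RB εA εB : ℝ) (hγ0 : 0 ≤ γ) (hγ1 : γ < 1)
    (rA : α → ℝ) (rB : β → ℝ) (hrA : ∀ a, |rA a| ≤ RA) (hrB : ∀ b, |rB b| ≤ RB)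
    (MA : Matrix α α ℝ) (hMA : IsTransition MA)
    (MB : Matrix β β ℝ) (hMB : IsTransition MB)
    (hATVA : ∀ x : α → ℝ, (∀ a, |x a| ≤ 1) →
      (1 / 2 : ℝ) * ∑ p, μ p * |P.mulVec (fun q => x q.1) p - (MA.mulVec x) p.1| ≤ εA)
    (hATVB : ∀ y : β → ℝ, (∀ b, |y b| ≤ 1) →
      (1 / 2 : ℝ) * ∑ p, μ p * |P.mulVec (fun q => y q.2) p - (MB.mulVec y) p.2| ≤ εB) :
    (∀ x : α → ℝ, (∀ a, |x a| ≤ 1) →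
      ∑ a, (∑ b, μ (a, b)) * |(localA P μ).mulVec x a - MA.mulVec x a| ≤ 2 * εA) ∧
    (∀ y : β → ℝ, (∀ b, |y b| ≤ 1) →
      ∑ b, (∑ a, μ (a, b)) * |(localB P μ).mulVec y b - MB.mulVec y b| ≤ 2 * εB) ∧
    ∑ p, μ p * |((1 - γ • P)⁻¹).mulVec (fun q => rA q.1 + rB q.2) p
            - ((((1 - γ • localA P μ)⁻¹).mulVec rA) p.1
              + (((1 - γ • localB P μ)⁻¹).mulVec rB) p.2)|
        ≤ 4 * γ * (εA * RA + εB * RB) / (1 - γ) ^ 2 := by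
  have hμ0 : ∀ p, 0 ≤ μ p := fun p => (hμpos p).le
  obtain ⟨⟨a₀, b₀⟩⟩ : Nonempty (α × β) := by
    by_contra h
    rw [not_nonempty_iff] at h
    simp at hμsum
  have hμA : ∀ a, ∑ b, μ (a, b) ≠ 0 := fun a =>
    (Finset.sum_pos (fun b _ => hμpos (a, b)) ⟨b₀, Finset.mem_univ _⟩).ne'
  have hμB : ∀ b, ∑ a, μ (a, b) ≠ 0 := fun b =>
    (Finset.sum_pos (fun a _ => hμpos (a, b)) ⟨a₀, Finset.mem_univ _⟩).ne'
  have hlocA : ∀ x : α → ℝ, (∀ a, |x a| ≤ 1) →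
      ∑ a, (∑ b, μ (a, b)) * |(localA P μ).mulVec x a - MA.mulVec x a| ≤ 2 * εA :=
    fun x hx => (sum_marginal_abs_localA_sub_le P hμ0 hμA x (MA *ᵥ x)).trans
      (by linarith [hATVA x hx])
  have hlocB : ∀ y : β → ℝ, (∀ b, |y b| ≤ 1) →
      ∑ b, (∑ a, μ (a, b)) * |(localB P μ).mulVec y b - MB.mulVec y b| ≤ 2 * εB :=
    fun y hy => (sum_marginal_abs_localB_sub_le P hμ0 hμB y (MB *ᵥ y)).trans
      (by linarith [hATVB y hy])
  refine ⟨hlocA, hlocB, ?_⟩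
  have hA := hP.sum_abs_resolvent_sub_le (isTransition_localA hP hμ0 hμA) hμ0 hstat Prod.fst
    (δ := 4 * εA) hγ0 hγ1 ((abs_nonneg _).trans (hrA a₀)) hrA (fun x hx => by
      have h := sum_mul_abs_sub_le_add hμ0 (P *ᵥ fun q => x q.1)
        (fun p => (localA P μ *ᵥ x) p.1) (fun p => (MA *ᵥ x) p.1)
      have hloc := hlocA x hx
      simp_rw [Finset.sum_mul] at hloc
      rw [Fintype.sum_prod_type
        (f := fun p => μ p * |(localA P μ *ᵥ x) p.1 - (MA *ᵥ x) p.1|)] at h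
      linarith [hATVA x hx])
  have hB := hP.sum_abs_resolvent_sub_le (isTransition_localB hP hμ0 hμB) hμ0 hstat Prod.snd
    (δ := 4 * εB) hγ0 hγ1 ((abs_nonneg _).trans (hrB b₀)) hrB (fun y hy => by
      have h := sum_mul_abs_sub_le_add hμ0 (P *ᵥ fun q => y q.2)
        (fun p => (localB P μ *ᵥ y) p.2) (fun p => (MB *ᵥ y) p.2)
      have hloc := hlocB y hy
      simp_rw [Finset.sum_mul] at hloc
      rw [Fintype.sum_prod_type_right
        (f := fun p => μ p * |(localB P μ *ᵥ y) p.2 - (MB *ᵥ y) p.2|)] at h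
      linarith [hATVB y hy])
  have hsplit : (fun q : α × β => rA q.1 + rB q.2) = (fun q => rA q.1) + fun q => rB q.2 := rfl
  rw [hsplit, mulVec_add]
  calc _ ≤ _ := Finset.sum_le_sum fun p _ => by
        rw [Pi.add_apply, add_sub_add_comm]
        exact (mul_le_mul_of_nonneg_left (abs_add_le _ _) (hμ0 p)).trans_eq (mul_add _ _ _)
    _ = _ := Finset.sum_add_distrib
    _ ≤ _ := add_le_add hA hB
    _ = _ := by ring
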